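/- arXiv:2203.11190 — 6 statements merged into one kernel-verified Lean document; each statement's English description precedes it below -/
import Mathlib

section
/- Let q and p be probability distributions on [n] = {1,…,n} with q(i) = 0 whenever p(i) = 0, let C ≥ 1, λ ≥ 1, and S ⊆ [n]. Suppose p(i) ≤ C/n for all i ∈ [n] and p(i) ≥ 1/(Cn) for all i ∈ S. Then ∑_{i∈S} q(i)·(q(i)/p(i))^{λ−1} ≤ C^{λ−1}·(1 + n^{λ−1}·λ(λ−1)·(DKL(q‖p) + log C)). In particular, when S = [n] the quantity D_λ(q‖p) := ∑_{i∈[n]} q(i)^λ p(i)^{1−λ} is bounded by C^{λ−1}·(1 + n^{λ−1}·λ(λ−1)·(DKL(q‖p) + log C)). -/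
open Finset

/-!
The function `N ^ (l - 1) * (l * (l - 1)) * klFun x - x ^ l` is convex on `[0, N]`, so it lies above
its tangent line at `1`. Take `x = q i / r i`, where `r` is a reference distribution with
`q ≤ N * r`, multiply by `r i` and sum: the affine terms add up to `1` and the `klFun` terms to the
KL divergence from `r`. This settles the case `p = r`. In general, replacing `r` by `p` costs a
factor `B ^ (l - 1)` where `r ≤ B * p`, and a summand `log A` where `p ≤ A * r`. The comparison on
`[n]` uses the uniform distribution as `r`, with `N = n` and `A = B = C`.
-/

open InformationTheory

section Pointwise

lemma tangentLine_le_of_convexOn {s : Set ℝ} {f : ℝ → ℝ} {f' a x : ℝ} (hf : ConvexOn ℝ s f)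
    (ha : a ∈ s) (hx : x ∈ s) (hf' : HasDerivAt f f' a) : f a + f' * (x - a) ≤ f x := by
  rcases lt_trichotomy x a with hxa | rfl | hax
  · have hslope := hf.slope_le_of_hasDerivAt hx ha hxa hf'
    rw [slope_def_field, div_le_iff₀ (sub_pos.2 hxa)] at hslope
    linarith
  · simp
  · have hslope := hf.le_slope_of_hasDerivAt ha hx hax hf'
    rw [slope_def_field, le_div_iff₀ (sub_pos.2 hax)] at hslope
    linarith

variable {l N x : ℝ}

lemma hasDerivAt_mul_klFun_sub_rpow (c : ℝ) (hx : x ≠ 0) :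
    HasDerivAt (fun y ↦ c * klFun y - y ^ l) (c * Real.log x - l * x ^ (l - 1)) x :=
  ((hasDerivAt_klFun hx).const_mul c).sub (Real.hasDerivAt_rpow_const (.inl hx))

lemma convexOn_mul_klFun_sub_rpow (hl : 1 ≤ l) :
    ConvexOn ℝ (Set.Icc 0 N) fun x ↦ N ^ (l - 1) * (l * (l - 1)) * klFun x - x ^ l := by
  have hcont : Continuous fun x ↦ N ^ (l - 1) * (l * (l - 1)) * klFun x - x ^ l :=
    (continuous_klFun.const_mul _).sub (Real.continuous_rpow_const (by linarith))
  refine convexOn_of_hasDerivWithinAt2_nonneg (convex_Icc 0 N) hcont.continuousOn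
    (f' := fun x ↦ N ^ (l - 1) * (l * (l - 1)) * Real.log x - l * x ^ (l - 1))
    (f'' := fun x ↦ l * (l - 1) * (N ^ (l - 1) - x ^ (l - 1)) / x) ?_ ?_ ?_ <;>
    rw [interior_Icc] <;> rintro x ⟨hx0, hxN⟩
  · exact (hasDerivAt_mul_klFun_sub_rpow _ hx0.ne').hasDerivWithinAt
  · refine HasDerivAt.hasDerivWithinAt ((((Real.hasDerivAt_log hx0.ne').const_mul _).sub
      ((Real.hasDerivAt_rpow_const (.inl hx0.ne')).const_mul l)).congr_deriv ?_)
    rw [Real.rpow_sub_one hx0.ne' (l - 1)]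
    ring
  · have hpow : x ^ (l - 1) ≤ N ^ (l - 1) := Real.rpow_le_rpow hx0.le hxN.le (by linarith)
    exact div_nonneg (mul_nonneg (mul_nonneg (by linarith) (by linarith)) (by linarith)) hx0.le

lemma rpow_le_tangentLine_add_mul_klFun (hl : 1 ≤ l) (hN : 1 ≤ N) (hx0 : 0 ≤ x) (hxN : x ≤ N) :
    x ^ l ≤ 1 + l * (x - 1) + N ^ (l - 1) * (l * (l - 1)) * klFun x := by
  have htangent := tangentLine_le_of_convexOn (convexOn_mul_klFun_sub_rpow hl) ⟨zero_le_one, hN⟩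
    ⟨hx0, hxN⟩ (hasDerivAt_mul_klFun_sub_rpow _ one_ne_zero)
  simp only [klFun_one, Real.one_rpow, Real.log_one] at htangent
  linarith

lemma mul_div_rpow_sub_one {a b : ℝ} (ha : 0 ≤ a) (hb : 0 ≤ b) (hl : l ≠ 0) :
    a * (a / b) ^ (l - 1) = a ^ l * b ^ (1 - l) := by
  rw [Real.div_rpow ha hb, div_eq_mul_inv, ← Real.rpow_neg hb, neg_sub, ← mul_assoc,
    ← Real.rpow_one_add' ha (by simpa using hl), add_sub_cancel]

end Pointwise

section FiniteDistributions

variable {ι : Type*} {q p r : ι → ℝ} {l A B N : ℝ}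

lemma sum_mul_div_rpow_le_of_le_mul {S : Finset ι} {s : ℝ} (hq0 : ∀ i, 0 ≤ q i)
    (hp0 : ∀ i, 0 ≤ p i) (hr0 : ∀ i, 0 ≤ r i) (hqr : ∀ i, r i = 0 → q i = 0) (hs : 0 ≤ s)
    (hB : 0 ≤ B) (hrp : ∀ i ∈ S, r i ≤ B * p i) :
    ∑ i ∈ S, q i * (q i / p i) ^ s ≤ B ^ s * ∑ i ∈ S, q i * (q i / r i) ^ s := by
  rw [mul_sum]
  refine sum_le_sum fun i hi ↦ ?_
  have hqr0 : 0 ≤ q i / r i := div_nonneg (hq0 i) (hr0 i)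
  have hratio : q i / p i ≤ B * (q i / r i) := by
    refine div_le_of_le_mul₀ (hp0 i) (by positivity) ?_
    calc q i = r i * (q i / r i) := (mul_div_cancel_of_imp' (hqr i)).symm
      _ ≤ B * p i * (q i / r i) := mul_le_mul_of_nonneg_right (hrp i hi) hqr0
      _ = B * (q i / r i) * p i := mul_right_comm ..
  calc q i * (q i / p i) ^ s
      ≤ q i * (B * (q i / r i)) ^ s := mul_le_mul_of_nonneg_left
        (Real.rpow_le_rpow (div_nonneg (hq0 i) (hp0 i)) hratio hs) (hq0 i)
    _ = B ^ s * (q i * (q i / r i) ^ s) := by rw [Real.mul_rpow hB hqr0, mul_left_comm]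

variable [Fintype ι]

lemma one_le_of_le_mul_of_sum_eq_one (hqsum : ∑ i, q i = 1) (hrsum : ∑ i, r i = 1)
    (hqr : ∀ i, q i ≤ N * r i) : 1 ≤ N := by
  simpa only [hqsum, ← mul_sum, hrsum, mul_one] using sum_le_sum fun i (_ : i ∈ univ) ↦ hqr i

lemma sum_mul_klFun_div (hqr : ∀ i, r i = 0 → q i = 0) (hsum : ∑ i, q i = ∑ i, r i) :
    ∑ i, r i * klFun (q i / r i) = ∑ i, q i * Real.log (q i / r i) := by
  have hterm (i) : r i * klFun (q i / r i) = q i * Real.log (q i / r i) + r i - q i := by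
    rw [klFun_apply, mul_sub, mul_add, ← mul_assoc, mul_div_cancel_of_imp' (hqr i), mul_one]
  simp only [hterm, sum_sub_distrib, sum_add_distrib, hsum, add_sub_cancel_right]

lemma sum_mul_div_rpow_le_one_add_sum_mul_log (hq0 : ∀ i, 0 ≤ q i) (hr0 : ∀ i, 0 ≤ r i)
    (hqsum : ∑ i, q i = 1) (hrsum : ∑ i, r i = 1) (hl : 1 ≤ l) (hqr : ∀ i, q i ≤ N * r i) :
    ∑ i, q i * (q i / r i) ^ (l - 1) ≤
      1 + N ^ (l - 1) * (l * (l - 1)) * ∑ i, q i * Real.log (q i / r i) := by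
  have hN : 1 ≤ N := one_le_of_le_mul_of_sum_eq_one hqsum hrsum hqr
  have hac (i) (hri : r i = 0) : q i = 0 := le_antisymm (by simpa [hri] using hqr i) (hq0 i)
  have hmul (i) : r i * (q i / r i) = q i := mul_div_cancel_of_imp' (hac i)
  have hterm (i) : q i * (q i / r i) ^ (l - 1) ≤ r i + l * (q i - r i) +
      N ^ (l - 1) * (l * (l - 1)) * (r i * klFun (q i / r i)) := by
    have hx0 : 0 ≤ q i / r i := div_nonneg (hq0 i) (hr0 i)
    have hxN : q i / r i ≤ N := div_le_of_le_mul₀ (hr0 i) (by linarith) (hqr i)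
    calc q i * (q i / r i) ^ (l - 1)
        = r i * (q i / r i) ^ l := by
          rw [← add_sub_cancel 1 l, Real.rpow_one_add' hx0 (by linarith), ← mul_assoc, hmul,
            add_sub_cancel]
      _ ≤ r i * (1 + l * (q i / r i - 1) + N ^ (l - 1) * (l * (l - 1)) * klFun (q i / r i)) :=
          mul_le_mul_of_nonneg_left (rpow_le_tangentLine_add_mul_klFun hl hN hx0 hxN) (hr0 i)
      _ = _ := by linear_combination l * hmul i
  calc ∑ i, q i * (q i / r i) ^ (l - 1)
      ≤ ∑ i, (r i + l * (q i - r i) +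
          N ^ (l - 1) * (l * (l - 1)) * (r i * klFun (q i / r i))) :=
        sum_le_sum fun i _ ↦ hterm i
    _ = 1 + N ^ (l - 1) * (l * (l - 1)) * ∑ i, r i * klFun (q i / r i) := by
        simp only [sum_add_distrib, ← mul_sum, sum_sub_distrib, hqsum, hrsum, sub_self, mul_zero,
          add_zero]
    _ = 1 + N ^ (l - 1) * (l * (l - 1)) * ∑ i, q i * Real.log (q i / r i) := by
        rw [sum_mul_klFun_div hac (hqsum.trans hrsum.symm)]

lemma sum_mul_log_div_le_add_log (hq0 : ∀ i, 0 ≤ q i) (hp0 : ∀ i, 0 ≤ p i) (hr0 : ∀ i, 0 ≤ r i)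
    (hac : ∀ i, p i = 0 → q i = 0) (hpr : ∀ i, p i ≤ A * r i) :
    ∑ i, q i * Real.log (q i / r i) ≤
      ∑ i, q i * Real.log (q i / p i) + (∑ i, q i) * Real.log A := by
  rw [sum_mul, ← sum_add_distrib]
  refine sum_le_sum fun i _ ↦ ?_
  rcases (hq0 i).eq_or_lt with hq | hq
  · simp [← hq]
  have hp : 0 < p i := (hp0 i).lt_of_ne' fun h ↦ hq.ne' (hac i h)
  have hr : 0 < r i := (hr0 i).lt_of_ne' fun h ↦ hp.not_ge (by simpa [h] using hpr i)
  calc q i * Real.log (q i / r i)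
      = q i * (Real.log (q i / p i) + Real.log (p i / r i)) := by
        rw [← Real.log_mul (by positivity) (by positivity), div_mul_div_cancel₀ hp.ne']
    _ ≤ q i * (Real.log (q i / p i) + Real.log A) := by
        gcongr
        exact (div_le_iff₀ hr).2 (hpr i)
    _ = _ := mul_add ..

theorem renyi_kl_comparison_general {S : Finset ι} (hq0 : ∀ i, 0 ≤ q i) (hp0 : ∀ i, 0 ≤ p i)
    (hr0 : ∀ i, 0 ≤ r i) (hqsum : ∑ i, q i = 1) (hrsum : ∑ i, r i = 1)
    (hac : ∀ i, p i = 0 → q i = 0) (hl : 1 ≤ l) (hB : 0 ≤ B) (hqr : ∀ i, q i ≤ N * r i)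
    (hpr : ∀ i, p i ≤ A * r i) (hrp : ∀ i ∈ S, r i ≤ B * p i) :
    ∑ i ∈ S, q i * (q i / p i) ^ (l - 1) ≤
      B ^ (l - 1) * (1 + N ^ (l - 1) * (l * (l - 1)) *
        (∑ i, q i * Real.log (q i / p i) + Real.log A)) := by
  have hN : 0 ≤ N := zero_le_one.trans (one_le_of_le_mul_of_sum_eq_one hqsum hrsum hqr)
  have hcoeff : 0 ≤ N ^ (l - 1) * (l * (l - 1)) :=
    mul_nonneg (Real.rpow_nonneg hN _) (mul_nonneg (by linarith) (by linarith))
  have hq_zero (i) (hri : r i = 0) : q i = 0 := le_antisymm (by simpa [hri] using hqr i) (hq0 i)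
  have hlog := sum_mul_log_div_le_add_log hq0 hp0 hr0 hac hpr
  rw [hqsum, one_mul] at hlog
  calc ∑ i ∈ S, q i * (q i / p i) ^ (l - 1)
      ≤ B ^ (l - 1) * ∑ i ∈ S, q i * (q i / r i) ^ (l - 1) :=
        sum_mul_div_rpow_le_of_le_mul hq0 hp0 hr0 hq_zero (sub_nonneg.2 hl) hB hrp
    _ ≤ B ^ (l - 1) * ∑ i, q i * (q i / r i) ^ (l - 1) := by
        gcongr
        · exact fun i _ _ ↦ mul_nonneg (hq0 i) (Real.rpow_nonneg (div_nonneg (hq0 i) (hr0 i)) _)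
        · exact subset_univ S
    _ ≤ B ^ (l - 1) * (1 + N ^ (l - 1) * (l * (l - 1)) * ∑ i, q i * Real.log (q i / r i)) := by
        gcongr
        exact sum_mul_div_rpow_le_one_add_sum_mul_log hq0 hr0 hqsum hrsum hl hqr
    _ ≤ B ^ (l - 1) * (1 + N ^ (l - 1) * (l * (l - 1)) *
          (∑ i, q i * Real.log (q i / p i) + Real.log A)) := by
        gcongr B ^ (l - 1) * (1 + ?_)
        exact mul_le_mul_of_nonneg_left hlog hcoeff

end FiniteDistributions

/-- Comparison between exponentiated Renyi divergences and the KL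
divergence for distributions `q, p` on `[n]` with `p` nearly uniform. -/
theorem renyi_kl_comparison (n : ℕ) (hn : 0 < n) (q p : Fin n → ℝ)
    (hq0 : ∀ i, 0 ≤ q i) (hp0 : ∀ i, 0 ≤ p i)
    (hqsum : ∑ i, q i = 1) (hpsum : ∑ i, p i = 1)
    (hac : ∀ i, p i = 0 → q i = 0)
    (C lam : ℝ) (hC : 1 ≤ C) (hlam : 1 ≤ lam)
    (S : Finset (Fin n))
    (hub : ∀ i, p i ≤ C / n)
    (hlb : ∀ i ∈ S, 1 / (C * n) ≤ p i) :
    (∑ i ∈ S, q i * (q i / p i) ^ (lam - 1) ≤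
      C ^ (lam - 1) * (1 + (n : ℝ) ^ (lam - 1) * (lam * (lam - 1)) *
        ((∑ i, q i * Real.log (q i / p i)) + Real.log C))) ∧
    (S = Finset.univ →
      ∑ i, q i ^ lam * p i ^ (1 - lam) ≤
        C ^ (lam - 1) * (1 + (n : ℝ) ^ (lam - 1) * (lam * (lam - 1)) *
          ((∑ i, q i * Real.log (q i / p i)) + Real.log C))) := by
  have hn' : (n : ℝ) ≠ 0 := Nat.cast_ne_zero.2 hn.ne'
  have hq1 (i) : q i ≤ 1 := hqsum ▸ single_le_sum (fun j _ ↦ hq0 j) (mem_univ i)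
  have hbound := renyi_kl_comparison_general (r := fun _ ↦ (n : ℝ)⁻¹) (N := n) (A := C) (B := C)
    hq0 hp0 (fun _ ↦ by positivity) hqsum (by simp [hn']) hac hlam (zero_le_one.trans hC)
    (by simpa [hn'] using hq1) hub fun i hi ↦ (div_le_iff₀' (zero_lt_one.trans_le hC)).1 <| by
      simpa only [div_eq_mul_inv, mul_inv_rev, one_mul] using hlb i hi
  refine ⟨hbound, ?_⟩
  rintro rfl
  simpa only [mul_div_rpow_sub_one (hq0 _) (hp0 _) (zero_lt_one.trans_le hlam).ne'] using hbound
end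

section
/- Let μ be a probability distribution on binom([n],k) that is negatively correlated, meaning P_{S∼μ}[T ⊆ S] ≤ ∏_{i∈T} p_i for every T ⊆ [n], where p_i = P_{S∼μ}[i ∈ S]. Then for every integer t with 2t ≤ k and every T ∈ binom([n],t), μ_t(T) ≤ exp(t²/k) · t! · ∏_{i∈T} (p_i/k), where μ_t = μD_{k→t}. -/
/-!
Negative correlation gives `∑_{S ⊇ T} μ(S) ≤ ∏_{i ∈ T} p_i`, so it remains to compare `1 / C(k, t)`
with `t! / k ^ t`, that is, `k ^ t` with the falling factorial `k! / (k - t)!`. Since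
`(1 + 1 / n) ^ n ≤ e`, the sequence `n ^ n / (eⁿ n!)` is decreasing; comparing its terms at
`m = k - t` and `k` bounds `k ^ k` by `eᵗ m ^ m k! / m!`. Dividing by `k ^ m` and using
`(m / k) ^ m = (1 - t / k) ^ m ≤ exp (-t m / k)` leaves the factor
`exp (t - t m / k) = exp (t² / k)`.
-/

open Finset

theorem succ_pow_le_exp_one_mul_pow (n : ℕ) :
    ((n : ℝ) + 1) ^ n ≤ Real.exp 1 * (n : ℝ) ^ n := by
  rcases n.eq_zero_or_pos with rfl | hn
  · simp
  have hbase : (n : ℝ) + 1 ≤ Real.exp (1 / n) * n :=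
    calc (n : ℝ) + 1 = (1 / n + 1) * n := by field_simp; ring
      _ ≤ Real.exp (1 / n) * n := by gcongr; exact Real.add_one_le_exp _
  calc ((n : ℝ) + 1) ^ n ≤ (Real.exp (1 / n) * n) ^ n := by gcongr
    _ = Real.exp 1 * (n : ℝ) ^ n := by
      rw [mul_pow, ← Real.exp_nat_mul, mul_one_div_cancel (by positivity)]

theorem antitone_pow_self_div_exp_mul_factorial :
    Antitone fun n : ℕ => (n : ℝ) ^ n / (Real.exp n * n.factorial) := by
  refine antitone_nat_of_succ_le fun n => ?_
  rw [div_le_div_iff₀ (by positivity) (by positivity), Nat.factorial_succ]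
  push_cast
  calc ((n : ℝ) + 1) ^ (n + 1) * (Real.exp n * n.factorial)
      = ((n : ℝ) + 1) ^ n * (Real.exp n * ((n + 1) * n.factorial)) := by ring
    _ ≤ Real.exp 1 * (n : ℝ) ^ n * (Real.exp n * ((n + 1) * n.factorial)) := by
      gcongr
      exact succ_pow_le_exp_one_mul_pow n
    _ = (n : ℝ) ^ n * (Real.exp (n + 1) * ((n + 1) * n.factorial)) := by
      rw [Real.exp_add]; ring

theorem pow_self_le_exp_mul_descFactorial_mul_pow {k t : ℕ} (ht : t ≤ k) :
    (k : ℝ) ^ k ≤ Real.exp t * k.descFactorial t * ((k - t : ℕ) : ℝ) ^ (k - t) := by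
  have hanti := antitone_pow_self_div_exp_mul_factorial (Nat.sub_le k t)
  have hfact : (k.factorial : ℝ) = (k - t).factorial * k.descFactorial t := by
    exact_mod_cast (Nat.factorial_mul_descFactorial ht).symm
  have hexp : Real.exp k = Real.exp t * Real.exp ((k - t : ℕ) : ℝ) := by
    rw [← Real.exp_add, ← Nat.cast_add, Nat.add_sub_cancel' ht]
  calc (k : ℝ) ^ k
      ≤ ((k - t : ℕ) : ℝ) ^ (k - t) / (Real.exp ((k - t : ℕ) : ℝ) * (k - t).factorial) *
          (Real.exp k * k.factorial) := (div_le_iff₀ (by positivity)).1 hanti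
    _ = Real.exp t * k.descFactorial t * ((k - t : ℕ) : ℝ) ^ (k - t) := by
      rw [hexp, hfact]
      field_simp

theorem sub_pow_le_exp_neg_mul_pow {k t : ℕ} (hk : 0 < k) (ht : t ≤ k) (m : ℕ) :
    ((k - t : ℕ) : ℝ) ^ m ≤ Real.exp (-(m * (t / k))) * (k : ℝ) ^ m := by
  have hbase : ((k - t : ℕ) : ℝ) ≤ Real.exp (-(t / k)) * k :=
    calc ((k - t : ℕ) : ℝ) = (1 - t / k) * k := by rw [Nat.cast_sub ht]; field_simp
      _ ≤ Real.exp (-(t / k)) * k := by gcongr; exact Real.one_sub_le_exp_neg _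
  calc ((k - t : ℕ) : ℝ) ^ m ≤ (Real.exp (-(t / k)) * k) ^ m := by gcongr
    _ = Real.exp (-(m * (t / k))) * (k : ℝ) ^ m := by
      rw [mul_pow, ← Real.exp_nat_mul, mul_neg]

theorem pow_le_exp_sq_div_mul_descFactorial {k t : ℕ} (hk : 0 < k) (ht : t ≤ k) :
    (k : ℝ) ^ t ≤ Real.exp ((t : ℝ) ^ 2 / k) * k.descFactorial t := by
  have hexp : Real.exp t * Real.exp (-((k - t : ℕ) * (t / k))) = Real.exp ((t : ℝ) ^ 2 / k) := by
    rw [← Real.exp_add, Nat.cast_sub ht]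
    congr 1
    field_simp
    ring
  refine le_of_mul_le_mul_right ?_ (by positivity : (0 : ℝ) < (k : ℝ) ^ (k - t))
  calc (k : ℝ) ^ t * (k : ℝ) ^ (k - t) = (k : ℝ) ^ k := by
        rw [← pow_add, Nat.add_sub_cancel' ht]
    _ ≤ Real.exp t * k.descFactorial t * ((k - t : ℕ) : ℝ) ^ (k - t) :=
      pow_self_le_exp_mul_descFactorial_mul_pow ht
    _ ≤ Real.exp t * k.descFactorial t *
          (Real.exp (-((k - t : ℕ) * (t / k))) * (k : ℝ) ^ (k - t)) := by
      gcongr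
      exact sub_pow_le_exp_neg_mul_pow hk ht _
    _ = Real.exp ((t : ℝ) ^ 2 / k) * k.descFactorial t * (k : ℝ) ^ (k - t) := by
      rw [← hexp]
      ring

theorem inv_choose_le_exp_sq_div_mul_factorial_div_pow {k t : ℕ} (hk : 0 < k) (ht : t ≤ k) :
    (k.choose t : ℝ)⁻¹ ≤ Real.exp ((t : ℝ) ^ 2 / k) * t.factorial / (k : ℝ) ^ t := by
  have hchoose : (0 : ℝ) < k.choose t := by exact_mod_cast Nat.choose_pos ht
  rw [le_div_iff₀ (by positivity), inv_mul_le_iff₀ hchoose]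
  calc (k : ℝ) ^ t ≤ Real.exp ((t : ℝ) ^ 2 / k) * k.descFactorial t :=
        pow_le_exp_sq_div_mul_descFactorial hk ht
    _ = k.choose t * (Real.exp ((t : ℝ) ^ 2 / k) * t.factorial) := by
      rw [Nat.descFactorial_eq_factorial_mul_choose]
      push_cast
      ring

section NegativeCorrelation

variable {α : Type*} [Fintype α] [DecidableEq α]

/-- The marginal `p_i = P_{S ∼ μ}[i ∈ S]`, for a weight `μ` on all finite subsets of `α`; a
distribution on `k`-subsets is encoded as a weight that vanishes on sets of any other size. -/
def marginal (μ : Finset α → ℝ) (i : α) : ℝ :=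
  ∑ S with i ∈ S, μ S

/-- Negative correlation, in the sense of upper bounds on the probability that a random set
contains a given one. -/
def IsNegativelyCorrelated (μ : Finset α → ℝ) : Prop :=
  ∀ T : Finset α, ∑ S with T ⊆ S, μ S ≤ ∏ i ∈ T, marginal μ i

/-- The image `μ D_{k→t}` of `μ` under the down operator, which passes from a `k`-set to a uniformly
random `t`-subset. Only its values on sets with `t` elements, where `t ≤ k`, are meaningful. -/
noncomputable def downOperator (k t : ℕ) (μ : Finset α → ℝ) (T : Finset α) : ℝ :=
  (k.choose t : ℝ)⁻¹ * ∑ S with T ⊆ S, μ S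

theorem negatively_correlated_down_operator_bound_general {μ : Finset α → ℝ} (hμ : ∀ S, 0 ≤ μ S)
    (hneg : IsNegativelyCorrelated μ) {k t : ℕ} (hk : 0 < k) (ht : t ≤ k) {T : Finset α}
    (hT : #T = t) :
    downOperator k t μ T ≤
      Real.exp ((t : ℝ) ^ 2 / k) * t.factorial * ∏ i ∈ T, marginal μ i / k :=
  calc (k.choose t : ℝ)⁻¹ * ∑ S with T ⊆ S, μ S
      ≤ Real.exp ((t : ℝ) ^ 2 / k) * t.factorial / (k : ℝ) ^ t * ∏ i ∈ T, marginal μ i :=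
        mul_le_mul (inv_choose_le_exp_sq_div_mul_factorial_div_pow hk ht) (hneg T)
          (sum_nonneg fun S _ => hμ S) (by positivity)
    _ = Real.exp ((t : ℝ) ^ 2 / k) * t.factorial * ∏ i ∈ T, marginal μ i / k := by
      rw [prod_div_distrib, prod_const, hT, div_mul_eq_mul_div, mul_div_assoc]

end NegativeCorrelation

/-- For a negatively correlated distribution `μ` on `k`-subsets of `[n]`,
the downed measure `μ_t = μ D_{k→t}` satisfies
`μ_t(T) ≤ exp(t²/k) · t! · ∏_{i∈T} (p_i/k)`. -/
theorem negatively_correlated_down_operator_bound (n k : ℕ) (hk : 0 < k)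
    (μ : Finset (Fin n) → ℝ)
    (hnn : ∀ S, 0 ≤ μ S) (hsupp : ∀ S, μ S ≠ 0 → S.card = k)
    (hsum : ∑ S, μ S = 1)
    (p : Fin n → ℝ)
    (hp : ∀ i, p i = ∑ S ∈ univ.filter (fun S : Finset (Fin n) => i ∈ S), μ S)
    (hnegcor : ∀ T : Finset (Fin n),
      ∑ S ∈ univ.filter (fun S : Finset (Fin n) => T ⊆ S), μ S ≤ ∏ i ∈ T, p i)
    (t : ℕ) (ht : 2 * t ≤ k) (T : Finset (Fin n)) (hT : T.card = t) :
    ((k.choose t : ℝ))⁻¹ * ∑ S ∈ univ.filter (fun S : Finset (Fin n) => T ⊆ S), μ S ≤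
      Real.exp ((t : ℝ) ^ 2 / k) * (t.factorial : ℝ) * ∏ i ∈ T, p i / k := by
  obtain rfl : p = marginal μ := funext hp
  exact negatively_correlated_down_operator_bound_general hnn hnegcor hk (by lia) hT
end

section
/- Let k₀ = k be a nonnegative integer and define recursively k_{i+1} = k_i − ⌈√(k_i)⌉ for all i ≥ 0. Then √(k_{i+1}) ≤ √(k_i) − 1/2 whenever k_i ≥ 1, and consequently k_t = 0 for every integer t ≥ 2√k. -/
/-!
Put `s = √x`. Since `x - s ≤ (s - 1/2)²`, subtracting `√x` from `x` lowers the square root by at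
least `1/2`, and rounding the subtracted amount up only helps. Hence `√(k_i)` loses `1/2` at each
step until it reaches `0`, which must have happened once `t / 2 ≥ √k`.
-/

theorem sqrt_sub_sqrt_le_sqrt_sub_half {x : ℝ} (hx : 1 / 4 ≤ x) :
    √(x - √x) ≤ √x - 1 / 2 := by
  have half_le_sqrt : 1 / 2 ≤ √x := Real.le_sqrt_of_sq_le (by linarith)
  refine Real.sqrt_le_iff.mpr ⟨sub_nonneg.mpr half_le_sqrt, ?_⟩
  calc
    x - √x ≤ √x ^ 2 - √x + 1 / 4 := by
      rw [Real.sq_sqrt (by linarith)]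
      linarith
    _ = (√x - 1 / 2) ^ 2 := by ring

theorem cast_sub_ceil_le {R : Type*} [Ring R] [LinearOrder R] [IsStrictOrderedRing R]
    [FloorSemiring R] {n : ℕ} {a : R} (ha : a ≤ n) : ((n - ⌈a⌉₊ : ℕ) : R) ≤ n - a := by
  rw [Nat.cast_sub (Nat.ceil_le.mpr ha)]
  exact sub_le_sub_left (Nat.le_ceil a) _

theorem sqrt_sub_ceil_sqrt_le_sqrt_sub_half {n : ℕ} (hn : 1 ≤ n) :
    √((n - ⌈√(n : ℝ)⌉₊ : ℕ) : ℝ) ≤ √n - 1 / 2 := by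
  have one_le_cast : (1 : ℝ) ≤ n := Nat.one_le_cast.mpr hn
  calc
    √((n - ⌈√(n : ℝ)⌉₊ : ℕ) : ℝ) ≤ √(n - √n) :=
      Real.sqrt_le_sqrt (cast_sub_ceil_le (Real.sqrt_le_self_iff.mpr (.inr one_le_cast)))
    _ ≤ √n - 1 / 2 := sqrt_sub_sqrt_le_sqrt_sub_half (by linarith)

theorem le_max_sub_nsmul_of_forall_succ_le {G : Type*} [AddCommGroup G] [LinearOrder G]
    [IsOrderedAddMonoid G] {u : ℕ → G} {c : G} (hc : 0 ≤ c)
    (hu : ∀ i, u (i + 1) ≤ max (u i - c) 0) (t : ℕ) : u t ≤ max (u 0 - t • c) 0 := by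
  induction t with
  | zero => simp
  | succ t ih =>
    refine (hu t).trans (max_le ?_ (le_max_right _ _))
    calc
      u t - c ≤ max (u 0 - t • c) 0 - c := sub_le_sub_right ih c
      _ = max (u 0 - (t + 1) • c) (-c) := by
        rw [← max_sub_sub_right, sub_sub, ← succ_nsmul, zero_sub]
      _ ≤ max (u 0 - (t + 1) • c) 0 := max_le_max_left _ (neg_nonpos.mpr hc)

/-- For the recursion `k₀ = k`, `k_{i+1} = k_i − ⌈√k_i⌉`:
`√(k_{i+1}) ≤ √(k_i) − 1/2` whenever `k_i ≥ 1`, and `k_t = 0` for every `t ≥ 2√k`. -/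
theorem batched_sampling_iteration_count (k : ℕ) (ks : ℕ → ℕ) (h0 : ks 0 = k)
    (hrec : ∀ i, ks (i + 1) = ks i - ⌈Real.sqrt (ks i)⌉₊) :
    (∀ i, 1 ≤ ks i → Real.sqrt (ks (i + 1)) ≤ Real.sqrt (ks i) - 1 / 2) ∧
    (∀ t : ℕ, 2 * Real.sqrt k ≤ (t : ℝ) → ks t = 0) := by
  have sqrt_step (i : ℕ) (hi : 1 ≤ ks i) : √(ks (i + 1) : ℝ) ≤ √(ks i) - 1 / 2 :=
    hrec i ▸ sqrt_sub_ceil_sqrt_le_sqrt_sub_half hi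
  have sqrt_step_max (i : ℕ) : √(ks (i + 1) : ℝ) ≤ max (√(ks i) - 1 / 2) 0 := by
    rcases Nat.eq_zero_or_pos (ks i) with hzero | hpos
    · simp [hrec i, hzero]
    · exact le_max_of_le_left (sqrt_step i hpos)
  refine ⟨sqrt_step, fun t ht => ?_⟩
  have sqrt_le_max : √(ks t : ℝ) ≤ max (√(ks 0) - t • (1 / 2)) 0 :=
    le_max_sub_nsmul_of_forall_succ_le (u := fun i => √(ks i : ℝ)) (by norm_num) sqrt_step_max t
  have sqrt_le_zero : √(ks t : ℝ) ≤ 0 := by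
    refine sqrt_le_max.trans (max_le ?_ le_rfl)
    rw [h0, nsmul_eq_mul]
    linarith
  exact_mod_cast (Real.sqrt_eq_zero (ks t).cast_nonneg).mp
    (sqrt_le_zero.antisymm (Real.sqrt_nonneg _))
end

section
/- Let n and k be positive integers, β ∈ (0,1), and let p₁,…,p_n ∈ [0,1] satisfy ∑_{i=1}^n p_i = k. Set t_i = ⌈(n/(βk))·p_i⌉ and |U| = ∑_{i=1}^n t_i. Then for every i with t_i ≥ 1, p_i/t_i ≤ βk/n, and moreover βk/n ≤ (1+√β)·k/|U|; hence p_i/t_i ≤ (1+√β)·k/|U| for every i with t_i ≥ 1. -/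
open Finset

/-! Rounding up only lowers the marginal `βk / n` that a copy would have in an exact subdivision,
and it costs at most one extra copy per element, so `|U| ≤ n / β + n = (1 + β) * (n / β)`. Since
`β < 1`, the factor `1 + β` is at most `1 + √β`. -/

section Ceil

variable {ι R : Type*} [Semiring R] [LinearOrder R] [IsStrictOrderedRing R] [FloorSemiring R]

theorem sum_le_cast_sum_natCeil (s : Finset ι) (f : ι → R) :
    ∑ i ∈ s, f i ≤ ((∑ i ∈ s, ⌈f i⌉₊ : ℕ) : R) := by
  rw [Nat.cast_sum]
  exact sum_le_sum fun i _ ↦ Nat.le_ceil (f i)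

theorem cast_sum_natCeil_le_sum_add_card {s : Finset ι} {f : ι → R} (hf : ∀ i ∈ s, 0 ≤ f i) :
    ((∑ i ∈ s, ⌈f i⌉₊ : ℕ) : R) ≤ ∑ i ∈ s, f i + #s :=
  calc ((∑ i ∈ s, ⌈f i⌉₊ : ℕ) : R)
      = ∑ i ∈ s, (⌈f i⌉₊ : R) := Nat.cast_sum _ _
    _ ≤ ∑ i ∈ s, (f i + 1) := sum_le_sum fun i hi ↦ (Nat.ceil_lt_add_one (hf i hi)).le
    _ = ∑ i ∈ s, f i + #s := by rw [sum_add_distrib, sum_const, nsmul_one]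

end Ceil

section Subdivision

variable {ι K : Type*} [Semifield K] [LinearOrder K] [IsStrictOrderedRing K] [FloorSemiring K]

theorem div_natCeil_mul_le_inv {s a : K} (hs : 0 < s) (hceil : 0 < ⌈s * a⌉₊) :
    a / ⌈s * a⌉₊ ≤ s⁻¹ := by
  rw [div_le_iff₀ (Nat.cast_pos.2 hceil), le_inv_mul_iff₀ hs]
  exact Nat.le_ceil _

theorem isotropic_transformation_marginal_upper_bound_general [Fintype ι] {n : ℕ}
    (hn : Fintype.card ι = n) {k β : K} (hk : 0 < k) (hβ : 0 < β)
    {p : ι → K} (hp : ∀ i, 0 ≤ p i) (hsum : ∑ i, p i = k)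
    {t : ι → ℕ} (ht : ∀ i, t i = ⌈n / (β * k) * p i⌉₊)
    {Ucard : ℕ} (hU : Ucard = ∑ i, t i) :
    (∀ i, 1 ≤ t i → p i / t i ≤ β * k / n) ∧
    β * k / n ≤ (1 + β) * k / Ucard ∧
    ∀ i, 1 ≤ t i → p i / t i ≤ (1 + β) * k / Ucard := by
  have : Nonempty ι := univ_nonempty_iff.1 (nonempty_of_sum_ne_zero (hsum.trans_ne hk.ne'))
  have hn_pos : (0 : K) < n := by exact_mod_cast hn ▸ Fintype.card_pos (α := ι)
  have hscale : 0 < n / (β * k) := by positivity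
  have hscaled_sum : ∑ i, n / (β * k) * p i = n / β := by
    rw [← mul_sum, hsum]
    field_simp
  obtain rfl : t = fun i ↦ ⌈n / (β * k) * p i⌉₊ := funext ht
  have hU_lower : n / β ≤ (Ucard : K) := by
    rw [hU, ← hscaled_sum]
    exact sum_le_cast_sum_natCeil _ _
  have hU_upper : (Ucard : K) ≤ n / β + n := by
    rw [hU, ← hscaled_sum, ← hn, ← card_univ]
    exact cast_sum_natCeil_le_sum_add_card fun i _ ↦ by have := hp i; positivity
  have hU_pos : (0 : K) < Ucard := (div_pos hn_pos hβ).trans_le hU_lower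
  have hcopy : ∀ i, 1 ≤ ⌈n / (β * k) * p i⌉₊ →
      p i / ⌈n / (β * k) * p i⌉₊ ≤ β * k / n := fun i hi ↦
    inv_div (n : K) (β * k) ▸ div_natCeil_mul_le_inv hscale hi
  have hthreshold : β * k / n ≤ (1 + β) * k / Ucard := by
    rw [le_div_iff₀ hU_pos]
    calc β * k / n * Ucard ≤ β * k / n * (n / β + n) := by gcongr
      _ = (1 + β) * k := by field_simp
  exact ⟨hcopy, hthreshold, fun i hi ↦ (hcopy i hi).trans hthreshold⟩

end Subdivision

/-- Marginal upper bound for the isotropic transformation: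
with `t_i = ⌈(n/(βk))·p_i⌉` and `|U| = ∑ t_i`, for every `i` with `t_i ≥ 1` we have
`p_i/t_i ≤ βk/n`, moreover `βk/n ≤ (1+√β)·k/|U|`, hence `p_i/t_i ≤ (1+√β)·k/|U|`. -/
theorem isotropic_transformation_marginal_upper_bound (n k : ℕ) (hn : 0 < n) (hk : 0 < k)
    (β : ℝ) (hβ : β ∈ Set.Ioo (0 : ℝ) 1)
    (p : Fin n → ℝ) (hp : ∀ i, p i ∈ Set.Icc (0 : ℝ) 1) (hsum : ∑ i, p i = k)
    (t : Fin n → ℕ) (ht : ∀ i, t i = ⌈((n : ℝ) / (β * k)) * p i⌉₊)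
    (Ucard : ℕ) (hU : Ucard = ∑ i, t i) :
    (∀ i, 1 ≤ t i → p i / (t i : ℝ) ≤ β * k / n) ∧
    (β * k / n ≤ (1 + Real.sqrt β) * k / (Ucard : ℝ)) ∧
    (∀ i, 1 ≤ t i → p i / (t i : ℝ) ≤ (1 + Real.sqrt β) * k / (Ucard : ℝ)) := by
  have hfactor : (1 + β) * k / Ucard ≤ (1 + √β) * k / Ucard := by
    gcongr
    exact Real.le_sqrt_self_iff.2 hβ.2.le
  obtain ⟨hcopy, hthreshold, hmarginal⟩ := isotropic_transformation_marginal_upper_bound_general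
    (Fintype.card_fin n) (Nat.cast_pos.2 hk) hβ.1 (fun i ↦ (hp i).1) hsum ht hU
  exact ⟨hcopy, hthreshold.trans hfactor, fun i hi ↦ (hmarginal i hi).trans hfactor⟩
end

section
/- Let μ be a probability distribution on binom([n],k) whose marginals p_i = P_{T∼μ}[i∈T] are all strictly positive. For 0 ≤ j ≤ k define μ_j = μD_{k→j} and μ'_j(S) := j!·∏_{i∈S}(p_i/k) for S ∈ binom([n],j) (so μ'_0(∅) = 1 and μ_0 is the point mass at ∅). Then for every 1 ≤ j ≤ k, DKL(μ_j ‖ μ'_j) − DKL(μ_{j−1} ‖ μ'_{j−1}) = ∑_{S∈binom([n],j−1)} μ_{j−1}(S) · DKL(μ_{j|S} ‖ p/k), where μ_{j|S}(i) := P_{T∼μ}[i∈T | S⊆T]/(k−j+1) for i ∈ [n]∖S, DKL(μ_{j|S}‖p/k) := ∑_{i∉S} μ_{j|S}(i)·log(k·μ_{j|S}(i)/p_i), and summands with μ_{j−1}(S) = 0 are interpreted as 0. -/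
open Finset

/-!
Draw the elements of a sample one at a time. If `S` has law `μ_{j-1}` and then `i` has law
`μ_{j|S}`, the pair `(S, i)` has weight `μ_j(S ∪ {i}) / j`, because a `j`-set is reached from each
of its `j` elements with the same weight. The product weight `μ'_{j-1}(S) * p i / k` equals
`μ'_j(S ∪ {i}) / j` for the same reason. The factors `1 / j` cancel in the likelihood ratio, so the
divergence between these two weights on pairs is `DKL(μ_j ‖ μ'_j)`, and the ordinary chain rule for
pairs splits off `DKL(μ_{j-1} ‖ μ'_{j-1})`.
-/

section KL

variable {ι κ : Type*}

/-- The Kullback-Leibler divergence of real-valued weights `q` from `p` on a finite set `s`. The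
convention `0 * log (0 / p) = 0` is automatic, but a summand with `p x = 0 < q x` is also `0`
instead of infinite. -/
noncomputable def klSum (s : Finset ι) (q p : ι → ℝ) : ℝ :=
  ∑ x ∈ s, q x * Real.log (q x / p x)

lemma klSum_const_mul_const_mul {s : Finset ι} {q p : ι → ℝ} {c d : ℝ}
    (hac : ∀ x ∈ s, c * q x ≠ 0 → d * p x ≠ 0) :
    klSum s (fun x => c * q x) (fun x => d * p x) =
      c * Real.log (c / d) * ∑ x ∈ s, q x + c * klSum s q p := by
  simp only [klSum, mul_sum, ← sum_add_distrib]
  refine sum_congr rfl fun x hx => ?_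
  by_cases hcq : c * q x = 0
  · rcases mul_eq_zero.1 hcq with h | h <;> simp [h]
  · obtain ⟨hc, hq⟩ := mul_ne_zero_iff.1 hcq
    obtain ⟨hd, hp⟩ := mul_ne_zero_iff.1 (hac x hx hcq)
    rw [mul_div_mul_comm, Real.log_mul (div_ne_zero hc hd) (div_ne_zero hq hp)]
    ring

lemma sum_klSum_mul_mul {s : Finset ι} {t : ι → Finset κ} {a b : ι → ℝ} {q p : ι → κ → ℝ}
    (hac : ∀ x ∈ s, ∀ y ∈ t x, a x * q x y ≠ 0 → b x * p x y ≠ 0)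
    (hq : ∀ x ∈ s, a x ≠ 0 → ∑ y ∈ t x, q x y = 1) :
    ∑ x ∈ s, klSum (t x) (fun y => a x * q x y) (fun y => b x * p x y) =
      klSum s a b + ∑ x ∈ s, a x * klSum (t x) (q x) (p x) := by
  rw [klSum, ← sum_add_distrib]
  refine sum_congr rfl fun x hx => ?_
  rw [klSum_const_mul_const_mul (hac x hx)]
  by_cases ha : a x = 0
  · simp [ha]
  · rw [hq x hx ha, mul_one]

end KL

section PowersetCard

variable {α : Type*} [DecidableEq α]

lemma sum_powersetCard_sum_insert {M : Type*} [AddCommMonoid M] (s : Finset α) (m : ℕ)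
    (f : Finset α → M) :
    ∑ S ∈ powersetCard m s, ∑ i ∈ s \ S, f (insert i S) =
      (m + 1) • ∑ R ∈ powersetCard (m + 1) s, f R := by
  calc ∑ S ∈ powersetCard m s, ∑ i ∈ s \ S, f (insert i S)
      = ∑ R ∈ powersetCard (m + 1) s, ∑ _i ∈ R, f R := by
        rw [sum_sigma', sum_sigma']
        refine sum_bij' (fun x _ => ⟨insert x.2 x.1, x.2⟩) (fun x _ => ⟨x.1.erase x.2, x.2⟩)
          ?_ ?_ ?_ ?_ fun _ _ => rfl
        all_goals
          rintro ⟨S, i⟩ h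
          simp only [mem_sigma, mem_powersetCard, mem_sdiff] at h ⊢
        · simp [insert_subset_iff, h]
        · simp [h.1.1 h.2, (erase_subset i S).trans h.1.1, card_erase_of_mem h.2, h.1.2]
        · simp [erase_insert h.2.2]
        · simp [insert_erase h.2]
    _ = ∑ R ∈ powersetCard (m + 1) s, (m + 1) • f R :=
        sum_congr rfl fun R hR => by rw [sum_const, (mem_powersetCard.1 hR).2]
    _ = (m + 1) • ∑ R ∈ powersetCard (m + 1) s, f R := (smul_sum ..).symm

lemma klSum_powersetCard_succ {s : Finset α} {m : ℕ} {f g : Finset α → ℝ} {f' g' : Finset α → α → ℝ}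
    (hf : ∀ S ∈ powersetCard m s, ∀ i ∈ s \ S, f (insert i S) = (m + 1) * f' S i)
    (hg : ∀ S ∈ powersetCard m s, ∀ i ∈ s \ S, g (insert i S) = (m + 1) * g' S i) :
    klSum (powersetCard (m + 1) s) f g =
      ∑ S ∈ powersetCard m s, klSum (s \ S) (f' S) (g' S) := by
  have hm : (m + 1 : ℝ) ≠ 0 := by positivity
  have hsum := sum_powersetCard_sum_insert s m fun R => f R * Real.log (f R / g R)
  rw [nsmul_eq_mul, Nat.cast_add_one] at hsum
  refine mul_left_cancel₀ hm (hsum.symm.trans ?_)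
  simp only [klSum, mul_sum]
  refine sum_congr rfl fun S hS => sum_congr rfl fun i hi => ?_
  rw [hf S hS i hi, hg S hS i hi, mul_div_mul_left _ _ hm, mul_assoc]

end PowersetCard

section SupersetSum

variable {α : Type*} [Fintype α] [DecidableEq α] {μ : Finset α → ℝ}

/-- The total weight that `μ` gives to the supersets of `S`; for a probability distribution this is
the probability that a sample contains `S`. -/
def supersetSum (μ : Finset α → ℝ) (S : Finset α) : ℝ :=
  ∑ T with S ⊆ T, μ T

lemma supersetSum_nonneg (hnn : ∀ S, 0 ≤ μ S) (S : Finset α) : 0 ≤ supersetSum μ S :=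
  sum_nonneg fun T _ => hnn T

lemma supersetSum_anti (hnn : ∀ S, 0 ≤ μ S) : Antitone (supersetSum μ) := fun _ _ h =>
  sum_le_sum_of_subset_of_nonneg (monotone_filter_right _ fun _ _ => h.trans) fun T _ _ => hnn T

lemma supersetSum_eq_zero_of_subset (hnn : ∀ S, 0 ≤ μ S) {S R : Finset α} (h : S ⊆ R)
    (hS : supersetSum μ S = 0) : supersetSum μ R = 0 :=
  le_antisymm ((supersetSum_anti hnn h).trans_eq hS) (supersetSum_nonneg hnn R)

lemma sum_supersetSum_insert {k : ℕ} (hsupp : ∀ S, μ S ≠ 0 → #S = k) (S : Finset α) :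
    ∑ i ∈ univ \ S, supersetSum μ (insert i S) = ((k : ℝ) - #S) * supersetSum μ S := by
  simp only [supersetSum, sum_filter]
  rw [sum_comm, mul_sum]
  refine sum_congr rfl fun T _ => ?_
  by_cases hST : S ⊆ T
  · have hfilter : {i ∈ univ \ S | insert i S ⊆ T} = T \ S := by
      ext i
      simp [insert_subset_iff, hST, and_comm]
    rw [← sum_filter, hfilter, sum_const, nsmul_eq_mul, if_pos hST, cast_card_sdiff hST]
    by_cases hT : μ T = 0
    · simp [hT]
    · rw [hsupp T hT]
  · rw [if_neg hST, mul_zero]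
    exact sum_eq_zero fun i _ => if_neg fun h => hST ((subset_insert i S).trans h)

end SupersetSum

section Weights

variable {α : Type*} [DecidableEq α]

/-- The probability `μ'_j(S)` that `j` independent draws from `π` are distinct and form the
`j`-element set `S`. -/
noncomputable def iidWeight (π : α → ℝ) (j : ℕ) (S : Finset α) : ℝ :=
  j.factorial * ∏ i ∈ S, π i

lemma iidWeight_insert (π : α → ℝ) (m : ℕ) {S : Finset α} {i : α} (hi : i ∉ S) :
    iidWeight π (m + 1) (insert i S) = (m + 1) * (iidWeight π m S * π i) := by
  rw [iidWeight, iidWeight, prod_insert hi, Nat.factorial_succ]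
  push_cast
  ring

variable [Fintype α]

/-- The weight `μ_j(S)` given to the `j`-element set `S` by the image of `μ` under the down operator
`D_{k→j}`. -/
noncomputable def downWeight (μ : Finset α → ℝ) (k j : ℕ) (S : Finset α) : ℝ :=
  (k.choose j : ℝ)⁻¹ * supersetSum μ S

/-- The law `P[i ∈ T | S ⊆ T] / (k - m)` of the next element of a sample from `μ` of which the
`m`-element set `S` is already known; it is the `μ_{j|S}(i)` of the paper for `j = m + 1`. It is
meant for `i ∉ S` only, and is `0` by convention if `supersetSum μ S = 0`. -/
noncomputable def condMarginal (μ : Finset α → ℝ) (k m : ℕ) (S : Finset α) (i : α) : ℝ :=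
  supersetSum μ (insert i S) / supersetSum μ S / (k - m)

variable {μ : Finset α → ℝ} {k m : ℕ}

lemma downWeight_insert (hnn : ∀ S, 0 ≤ μ S) (hm : m < k) (S : Finset α) (i : α) :
    downWeight μ k (m + 1) (insert i S) =
      (m + 1) * (downWeight μ k m S * condMarginal μ k m S i) := by
  rw [downWeight, downWeight, condMarginal]
  by_cases hW : supersetSum μ S = 0
  · simp [supersetSum_eq_zero_of_subset hnn (subset_insert i S) hW]
  have hkm : (k : ℝ) - m ≠ 0 := sub_ne_zero.2 (by exact_mod_cast hm.ne')
  have hchoose : (k.choose m : ℝ) ≠ 0 := by exact_mod_cast (Nat.choose_pos hm.le).ne'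
  have hchoose_succ : (k.choose (m + 1) : ℝ) ≠ 0 := by exact_mod_cast (Nat.choose_pos hm).ne'
  have hrec : (k.choose (m + 1) : ℝ) * (m + 1) = k.choose m * (k - m) := by
    rw [← Nat.cast_sub hm.le]
    exact_mod_cast Nat.choose_succ_right_eq k m
  field_simp
  linear_combination -supersetSum μ (insert i S) * hrec

lemma sum_condMarginal (hsupp : ∀ S, μ S ≠ 0 → #S = k) {S : Finset α} (hS : #S = m) (hm : m < k)
    (hW : supersetSum μ S ≠ 0) : ∑ i ∈ univ \ S, condMarginal μ k m S i = 1 := by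
  have hkm : (k : ℝ) - m ≠ 0 := sub_ne_zero.2 (by exact_mod_cast hm.ne')
  simp only [condMarginal, ← sum_div]
  rw [sum_supersetSum_insert hsupp, hS, mul_div_cancel_right₀ _ hW, div_self hkm]

lemma iidWeight_pos_of_downWeight_ne_zero {π : α → ℝ} (hπ : ∀ T, μ T ≠ 0 → ∀ i ∈ T, 0 < π i)
    {j : ℕ} {S : Finset α} (hS : downWeight μ k j S ≠ 0) : 0 < iidWeight π j S := by
  obtain ⟨T, hST, hT⟩ := exists_ne_zero_of_sum_ne_zero (right_ne_zero_of_mul hS)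
  have hprod : 0 < ∏ i ∈ S, π i := prod_pos fun i hi => hπ T hT i ((mem_filter.1 hST).2 hi)
  exact mul_pos (by exact_mod_cast j.factorial_pos) hprod

end Weights

theorem kl_chain_rule_down_operator_general {α : Type*} [Fintype α] [DecidableEq α]
    {μ : Finset α → ℝ} {k m : ℕ} (hnn : ∀ S, 0 ≤ μ S) (hsupp : ∀ S, μ S ≠ 0 → #S = k)
    {π : α → ℝ} (hπ : ∀ T, μ T ≠ 0 → ∀ i ∈ T, 0 < π i) (hm : m < k) :
    klSum (powersetCard (m + 1) univ) (downWeight μ k (m + 1)) (iidWeight π (m + 1)) -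
        klSum (powersetCard m univ) (downWeight μ k m) (iidWeight π m) =
      ∑ S ∈ powersetCard m univ,
        downWeight μ k m S * klSum (univ \ S) (condMarginal μ k m S) π := by
  have hdown := downWeight_insert hnn hm
  have hiid : ∀ S, ∀ i ∈ univ \ S,
      iidWeight π (m + 1) (insert i S) = (m + 1) * (iidWeight π m S * π i) :=
    fun _ _ hi => iidWeight_insert π m (mem_sdiff.1 hi).2
  have hac : ∀ S, ∀ i ∈ univ \ S,
      downWeight μ k m S * condMarginal μ k m S i ≠ 0 → iidWeight π m S * π i ≠ 0 := by
    intro S i hi h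
    have hins : downWeight μ k (m + 1) (insert i S) ≠ 0 := by
      rw [hdown]
      exact mul_ne_zero m.cast_add_one_ne_zero h
    have hpos := iidWeight_pos_of_downWeight_ne_zero hπ hins
    rw [hiid S i hi] at hpos
    exact right_ne_zero_of_mul hpos.ne'
  have hmass : ∀ S ∈ powersetCard m univ, downWeight μ k m S ≠ 0 →
      ∑ i ∈ univ \ S, condMarginal μ k m S i = 1 := fun S hS hW =>
    sum_condMarginal hsupp (mem_powersetCard.1 hS).2 hm (right_ne_zero_of_mul hW)
  rw [klSum_powersetCard_succ (fun S _ i _ => hdown S i) (fun S _ => hiid S),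
    sum_klSum_mul_mul (fun S _ => hac S) hmass, add_sub_cancel_left]

/-- Chain rule of KL divergence for the sequential construction of a
sample from `μ_j = μ D_{k→j}` one element at a time, relative to the i.i.d. proposal
`μ'_j(S) = j!·∏_{i∈S} p_i/k`:
`DKL(μ_j‖μ'_j) − DKL(μ_{j−1}‖μ'_{j−1}) = ∑_S μ_{j−1}(S)·DKL(μ_{j|S} ‖ p/k)`. -/
theorem kl_chain_rule_down_operator (n k : ℕ) (hk : 0 < k) (hkn : k ≤ n)
    (μ : Finset (Fin n) → ℝ)
    (hnn : ∀ S, 0 ≤ μ S) (hsupp : ∀ S, μ S ≠ 0 → S.card = k)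
    (hsum : ∑ S, μ S = 1)
    (p : Fin n → ℝ)
    (hp : ∀ i, p i = ∑ S ∈ univ.filter (fun S : Finset (Fin n) => i ∈ S), μ S)
    (hppos : ∀ i, 0 < p i)
    (j : ℕ) (hj1 : 1 ≤ j) (hjk : j ≤ k)
    -- conditional marginal distributions μ_{j|S}
    (q : Finset (Fin n) → Fin n → ℝ)
    (hq : ∀ S i, q S i =
      (∑ T ∈ univ.filter (fun T : Finset (Fin n) => S ⊆ T ∧ i ∈ T), μ T) /
        (∑ T ∈ univ.filter (fun T : Finset (Fin n) => S ⊆ T), μ T) /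
          ((k : ℝ) - ((j - 1 : ℕ) : ℝ))) :
    (∑ S ∈ univ.filter (fun S : Finset (Fin n) => S.card = j),
        ((k.choose j : ℝ))⁻¹ * (∑ T ∈ univ.filter (fun T : Finset (Fin n) => S ⊆ T), μ T) *
          Real.log ((((k.choose j : ℝ))⁻¹ *
              (∑ T ∈ univ.filter (fun T : Finset (Fin n) => S ⊆ T), μ T)) /
            ((j.factorial : ℝ) * ∏ i ∈ S, p i / k))) -
      (∑ S ∈ univ.filter (fun S : Finset (Fin n) => S.card = j - 1),
        ((k.choose (j - 1) : ℝ))⁻¹ *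
            (∑ T ∈ univ.filter (fun T : Finset (Fin n) => S ⊆ T), μ T) *
          Real.log ((((k.choose (j - 1) : ℝ))⁻¹ *
              (∑ T ∈ univ.filter (fun T : Finset (Fin n) => S ⊆ T), μ T)) /
            (((j - 1).factorial : ℝ) * ∏ i ∈ S, p i / k))) =
    ∑ S ∈ univ.filter (fun S : Finset (Fin n) => S.card = j - 1),
      ((k.choose (j - 1) : ℝ))⁻¹ *
          (∑ T ∈ univ.filter (fun T : Finset (Fin n) => S ⊆ T), μ T) *
        (∑ i ∈ univ \ S, q S i * Real.log ((k : ℝ) * q S i / p i)) := by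
  obtain ⟨m, rfl⟩ := Nat.exists_eq_add_of_le' hj1
  have hq' : ∀ S i, q S i = condMarginal μ k m S i := fun S i => by
    simp only [hq, condMarginal, supersetSum, insert_subset_iff, and_comm, Nat.add_sub_cancel]
  have hπ : ∀ T, μ T ≠ 0 → ∀ i ∈ T, 0 < p i / k := fun _ _ i _ =>
    div_pos (hppos i) (by exact_mod_cast hk)
  simp only [univ_filter_card_eq, Nat.add_sub_cancel]
  refine (kl_chain_rule_down_operator_general hnn hsupp hπ hjk).trans
    (sum_congr rfl fun S _ => congrArg _ (sum_congr rfl fun i _ => ?_))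
  rw [hq', div_div_eq_mul_div, mul_comm (k : ℝ)]
end

section
/- Fix α ∈ (0,1], a positive integer n, and a probability distribution μ on the subsets of [n]. Define the α-thinning T_α(μ)(S) := ∑_{U⊇S} μ(U)·α^{|S|}·(1−α)^{|U|−|S|}, and for S₀ ⊆ [n] with T_α(μ)(S₀) > 0 define the residual distribution μ^{S₀} on subsets of [n]∖S₀ by μ^{S₀}(F) = (1−α)^{|F|}·μ(F∪S₀) / ∑_{F'⊆[n]∖S₀} (1−α)^{|F'|}·μ(F'∪S₀). Define P₀^μ := T_α(μ) and recursively P_i^μ(S) := ∑_{S₀⊆S} P₀^μ(S₀) · P_{i−1}^{μ^{S₀}}(S∖S₀) for i ≥ 1. Then for every i ≥ 0 and every S ⊆ [n], P_i^μ(S) = ∑_{U⊇S} μ(U)·(1−α)^{(i+1)·(|U|−|S|)}·(1−(1−α)^{i+1})^{|S|}. In particular, P_i^μ(S) ≥ μ(S)·(1−(1−α)^{i+1})^{|S|}. -/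
open Finset

/-- The `α`-thinning of a measure `μ` on subsets of `[n]`:
`T_α(μ)(S) = ∑_{U⊇S} μ(U)·α^{|S|}·(1−α)^{|U|−|S|}`. -/
noncomputable def alphaThin (n : ℕ) (α : ℝ) (μ : Finset (Fin n) → ℝ) (S : Finset (Fin n)) : ℝ :=
  ∑ V ∈ Finset.univ.filter (fun V : Finset (Fin n) => S ⊆ V),
    μ V * α ^ S.card * (1 - α) ^ (V.card - S.card)

/-- The residual distribution after sampling `S₀` in the filtering process: a distribution
on subsets of `[n] ∖ S₀` given by
`μ^{S₀}(F) = (1−α)^{|F|}·μ(F∪S₀) / ∑_{F'⊆[n]∖S₀} (1−α)^{|F'|}·μ(F'∪S₀)`. -/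
noncomputable def residualDist (n : ℕ) (α : ℝ) (μ : Finset (Fin n) → ℝ) (S₀ : Finset (Fin n))
    (F : Finset (Fin n)) : ℝ :=
  if F ⊆ S₀ᶜ then
    (1 - α) ^ F.card * μ (F ∪ S₀) /
      ∑ F' ∈ S₀ᶜ.powerset, (1 - α) ^ F'.card * μ (F' ∪ S₀)
  else 0

/-- The output distribution of `i+1` rounds of the filtering process:
`P₀^μ = T_α(μ)` and `P_i^μ(S) = ∑_{S₀⊆S} P₀^μ(S₀)·P_{i−1}^{μ^{S₀}}(S∖S₀)`. -/
noncomputable def filterProcess (n : ℕ) (α : ℝ) : ℕ → (Finset (Fin n) → ℝ) → Finset (Fin n) → ℝ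
  | 0, μ => alphaThin n α μ
  | i + 1, μ => fun S =>
      ∑ S₀ ∈ S.powerset, alphaThin n α μ S₀ *
        filterProcess n α i (residualDist n α μ S₀) (S \ S₀)

/-! One `α`-round followed by a `β`-thinning of the residual is a `1 - (1 - α) * (1 - β)`-thinning.
The normalising constant of the residual cancels against the probability of the sampled set `S₀`
(Bayes' rule), so a superset `V` of the output `S` contributes `μ V * ((1 - α) * (1 - β)) ^ |V \ S|`
times a product over `S` in which each element is either sampled in the first round (factor `α`)
or missed then and sampled later (factor `(1 - α) * β`); summing over `S₀ ⊆ S` is the binomial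
theorem. Iterating multiplies the probabilities `1 - α` of being missed in a round. -/

theorem sum_superset_eq_sum_union {ι M : Type*} [Fintype ι] [DecidableEq ι] [AddCommMonoid M]
    {S₀ S : Finset ι} (h : S₀ ⊆ S) (f : Finset ι → M) :
    ∑ V with S ⊆ V, f V = ∑ W ∈ S₀ᶜ.powerset with S \ S₀ ⊆ W, f (W ∪ S₀) := by
  have hrestore {V : Finset ι} (hV : S ⊆ V) : V \ S₀ ∪ S₀ = V :=
    sdiff_union_of_subset (h.trans hV)
  refine sum_nbij' (· \ S₀) (· ∪ S₀) ?_ ?_ ?_ ?_ ?_ <;>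
    simp only [mem_filter, mem_univ, true_and, mem_powerset]
  · exact fun V hV =>
      ⟨subset_compl_iff_disjoint_right.2 sdiff_disjoint, sdiff_subset_sdiff hV subset_rfl⟩
  · exact fun W hW => sdiff_le_iff'.1 hW.2
  · exact fun V hV => hrestore hV
  · exact fun W hW => union_sdiff_cancel_right (subset_compl_iff_disjoint_right.1 hW.1)
  · exact fun V hV => congrArg f (hrestore hV).symm

section Round

variable {n : ℕ} {α : ℝ} {μ : Finset (Fin n) → ℝ}

theorem alphaThin_eq_pow_card_mul_sum (α : ℝ) (μ : Finset (Fin n) → ℝ) (S₀ : Finset (Fin n)) :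
    alphaThin n α μ S₀ =
      α ^ #S₀ * ∑ F ∈ S₀ᶜ.powerset, (1 - α) ^ #F * μ (F ∪ S₀) := by
  rw [alphaThin, sum_superset_eq_sum_union (subset_refl S₀), sdiff_self, mul_sum]
  simp only [bot_eq_empty, empty_subset, filter_true]
  refine sum_congr rfl fun F hF => ?_
  have hdisj : Disjoint F S₀ := subset_compl_iff_disjoint_right.1 (mem_powerset.1 hF)
  rw [card_union_of_disjoint hdisj, Nat.add_sub_cancel]
  ring

theorem pow_card_mul_union_nonneg (hα : α ≤ 1) (hμ : ∀ S, 0 ≤ μ S) (S₀ F : Finset (Fin n)) :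
    0 ≤ (1 - α) ^ #F * μ (F ∪ S₀) :=
  mul_nonneg (pow_nonneg (sub_nonneg.2 hα) _) (hμ _)

theorem residualDist_of_subset {S₀ F : Finset (Fin n)} (hF : F ⊆ S₀ᶜ) :
    residualDist n α μ S₀ F =
      (1 - α) ^ #F * μ (F ∪ S₀) / ∑ F' ∈ S₀ᶜ.powerset, (1 - α) ^ #F' * μ (F' ∪ S₀) :=
  if_pos hF

theorem residualDist_of_not_subset {S₀ F : Finset (Fin n)} (hF : ¬F ⊆ S₀ᶜ) :
    residualDist n α μ S₀ F = 0 :=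
  if_neg hF

theorem residualDist_nonneg (hα : α ≤ 1) (hμ : ∀ S, 0 ≤ μ S) (S₀ F : Finset (Fin n)) :
    0 ≤ residualDist n α μ S₀ F := by
  have hnum := pow_card_mul_union_nonneg hα hμ S₀
  by_cases hF : F ⊆ S₀ᶜ
  · rw [residualDist_of_subset hF]
    exact div_nonneg (hnum F) (sum_nonneg fun F' _ => hnum F')
  · exact (residualDist_of_not_subset hF).ge

theorem alphaThin_mul_residualDist (hα : α ≤ 1) (hμ : ∀ S, 0 ≤ μ S) {S₀ F : Finset (Fin n)}
    (hF : F ⊆ S₀ᶜ) :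
    alphaThin n α μ S₀ * residualDist n α μ S₀ F =
      α ^ #S₀ * ((1 - α) ^ #F * μ (F ∪ S₀)) := by
  rw [alphaThin_eq_pow_card_mul_sum, residualDist_of_subset hF, mul_assoc]
  -- A vanishing normalising constant forces the numerator to vanish too.
  rw [mul_div_cancel_of_imp' fun hzero =>
    (sum_eq_zero_iff_of_nonneg fun F' _ => pow_card_mul_union_nonneg hα hμ S₀ F').1 hzero F
      (mem_powerset.2 hF)]

theorem alphaThin_residualDist (α β : ℝ) (μ : Finset (Fin n) → ℝ) (S₀ T : Finset (Fin n)) :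
    alphaThin n β (residualDist n α μ S₀) T =
      ∑ W ∈ S₀ᶜ.powerset with T ⊆ W,
        residualDist n α μ S₀ W * β ^ #T * (1 - β) ^ (#W - #T) := by
  refine (sum_subset (filter_subset_filter _ (subset_univ _)) fun W hW hW' => ?_).symm
  have hWS₀ : ¬W ⊆ S₀ᶜ := fun h =>
    hW' (mem_filter.2 ⟨mem_powerset.2 h, (mem_filter.1 hW).2⟩)
  rw [residualDist_of_not_subset hWS₀, zero_mul, zero_mul]

theorem alphaThin_mul_alphaThin_residualDist (hα : α ≤ 1) (hμ : ∀ S, 0 ≤ μ S) (β : ℝ)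
    {S₀ S : Finset (Fin n)} (hS : S₀ ⊆ S) :
    alphaThin n α μ S₀ * alphaThin n β (residualDist n α μ S₀) (S \ S₀) =
      ∑ V with S ⊆ V, μ V * ((1 - α) * (1 - β)) ^ (#V - #S) *
        (α ^ #S₀ * ((1 - α) * β) ^ (#S - #S₀)) := by
  rw [alphaThin_residualDist, mul_sum, sum_superset_eq_sum_union hS]
  refine sum_congr rfl fun W hW => ?_
  obtain ⟨hWS₀, hSW⟩ : W ⊆ S₀ᶜ ∧ S \ S₀ ⊆ W := by
    simpa only [mem_filter, mem_powerset] using hW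
  have hunion : #(W ∪ S₀) = #W + #S₀ :=
    card_union_of_disjoint (subset_compl_iff_disjoint_right.1 hWS₀)
  have hsdiff : #(S \ S₀) + #S₀ = #S := card_sdiff_add_card_eq_card hS
  obtain ⟨k, hk⟩ := Nat.exists_eq_add_of_le (card_le_card hSW)
  calc alphaThin n α μ S₀ *
        (residualDist n α μ S₀ W * β ^ #(S \ S₀) * (1 - β) ^ (#W - #(S \ S₀)))
      = α ^ #S₀ * ((1 - α) ^ #W * μ (W ∪ S₀)) * β ^ #(S \ S₀) *
          (1 - β) ^ (#W - #(S \ S₀)) := by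
        rw [← alphaThin_mul_residualDist hα hμ hWS₀]
        ring
    _ = μ (W ∪ S₀) * ((1 - α) * (1 - β)) ^ (#(W ∪ S₀) - #S) *
          (α ^ #S₀ * ((1 - α) * β) ^ (#S - #S₀)) := by
        rw [hunion, ← hsdiff, Nat.add_sub_add_right, Nat.add_sub_cancel, hk,
          Nat.add_sub_cancel_left, mul_pow, mul_pow]
        ring

theorem sum_alphaThin_mul_alphaThin_residualDist (hα : α ≤ 1) (hμ : ∀ S, 0 ≤ μ S) (β : ℝ)
    (S : Finset (Fin n)) :
    ∑ S₀ ∈ S.powerset, alphaThin n α μ S₀ * alphaThin n β (residualDist n α μ S₀) (S \ S₀) =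
      alphaThin n (1 - (1 - α) * (1 - β)) μ S := by
  rw [sum_congr rfl fun S₀ hS₀ =>
    alphaThin_mul_alphaThin_residualDist hα hμ β (mem_powerset.1 hS₀), sum_comm, alphaThin]
  refine sum_congr rfl fun V _ => ?_
  have hrate : α + (1 - α) * β = 1 - (1 - α) * (1 - β) := by ring
  rw [← mul_sum, sum_pow_mul_eq_add_pow, hrate, sub_sub_cancel]
  ring

theorem filterProcess_eq_alphaThin (hα : α ≤ 1) (hμ : ∀ S, 0 ≤ μ S) (i : ℕ) :
    filterProcess n α i μ = alphaThin n (1 - (1 - α) ^ (i + 1)) μ := by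
  induction i generalizing μ with
  | zero => rw [filterProcess, zero_add, pow_one, sub_sub_cancel]
  | succ i ih =>
    funext S
    simp only [filterProcess, ih (residualDist_nonneg hα hμ _)]
    rw [sum_alphaThin_mul_alphaThin_residualDist hα hμ, sub_sub_cancel, ← pow_succ']

theorem mul_pow_card_le_alphaThin (hα : α ∈ Set.Icc (0 : ℝ) 1) (hμ : ∀ S, 0 ≤ μ S)
    (S : Finset (Fin n)) : μ S * α ^ #S ≤ alphaThin n α μ S := by
  have hterm (V : Finset (Fin n)) : 0 ≤ μ V * α ^ #S * (1 - α) ^ (#V - #S) :=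
    mul_nonneg (mul_nonneg (hμ V) (pow_nonneg hα.1 _)) (pow_nonneg (sub_nonneg.2 hα.2) _)
  calc μ S * α ^ #S = μ S * α ^ #S * (1 - α) ^ (#S - #S) := by
        rw [Nat.sub_self, pow_zero, mul_one]
    _ ≤ alphaThin n α μ S :=
        single_le_sum (fun V _ => hterm V) (mem_filter.2 ⟨mem_univ S, subset_rfl⟩)

end Round

theorem filter_process_output_distribution_general (n : ℕ) (α : ℝ) (hα : α ∈ Set.Icc (0 : ℝ) 1)
    (μ : Finset (Fin n) → ℝ) (hnn : ∀ S, 0 ≤ μ S) (i : ℕ) (S : Finset (Fin n)) :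
    (filterProcess n α i μ S =
      ∑ V ∈ univ.filter (fun V : Finset (Fin n) => S ⊆ V),
        μ V * (1 - α) ^ ((i + 1) * (V.card - S.card)) *
          (1 - (1 - α) ^ (i + 1)) ^ S.card) ∧
    μ S * (1 - (1 - α) ^ (i + 1)) ^ S.card ≤ filterProcess n α i μ S := by
  have hmiss : (1 - α) ^ (i + 1) ∈ Set.Icc (0 : ℝ) 1 :=
    ⟨pow_nonneg (sub_nonneg.2 hα.2) _, pow_le_one₀ (sub_nonneg.2 hα.2) (sub_le_self 1 hα.1)⟩
  rw [filterProcess_eq_alphaThin hα.2 hnn]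
  constructor
  · refine sum_congr rfl fun V _ => ?_
    rw [sub_sub_cancel, ← pow_mul, mul_right_comm]
  · exact mul_pow_card_le_alphaThin (Set.Icc.mem_iff_one_sub_mem.1 hmiss) hnn S

/-- `i+1` rounds of the filtering process yield exactly the
`(1−(1−α)^{i+1})`-thinning of `μ`; in particular
`P_i^μ(S) ≥ μ(S)·(1−(1−α)^{i+1})^{|S|}`. -/
theorem filter_process_output_distribution (n : ℕ) (α : ℝ) (hα : α ∈ Set.Ioc (0 : ℝ) 1)
    (μ : Finset (Fin n) → ℝ) (hnn : ∀ S, 0 ≤ μ S) (hsum : ∑ S, μ S = 1) :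
    ∀ (i : ℕ) (S : Finset (Fin n)),
      (filterProcess n α i μ S =
        ∑ V ∈ univ.filter (fun V : Finset (Fin n) => S ⊆ V),
          μ V * (1 - α) ^ ((i + 1) * (V.card - S.card)) *
            (1 - (1 - α) ^ (i + 1)) ^ S.card) ∧
      μ S * (1 - (1 - α) ^ (i + 1)) ^ S.card ≤ filterProcess n α i μ S := by
  exact filter_process_output_distribution_general n α (Set.Ioc_subset_Icc_self hα) μ hnn
end
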